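/- Fix an odd integer d ≥ 3 and an integer m ≥ 2. There exists a constant c > 0, depending only on d and m, such that for any m parallel hyperplanes Π_1, …, Π_m in E^{d+1} and finite sets P_i ⊂ Π_i with each 𝒫_i = conv(P_i) a d-dimensional polytope with n_i vertices, the polytope 𝒫 = conv(P_1 ∪ … ∪ P_m) satisfies, for every ⌊(d+1)/2⌋ ≤ k ≤ d: f_k(𝒫) ≤ c · Σ_{1 ≤ i ≠ j ≤ m} n_i · n_j^{⌊d/2⌋}. (Lemma 2.5.) -/

import Mathlib

/-!
A supporting functional of a polytope, normalized to have maximum `1`, is a point of the dual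
polyhedron `{z | z (a i) ≤ 1}`, and the face it cuts out is recorded by the tight inequalities.
The bound is thus an upper bound theorem for coloured systems of linear inequalities, where the
vertices of each slice form one colour.

*Simple polyhedra.* Suppose that tight vectors are always linearly independent, and let the
vectors span dimension `D`. Each vertex of the polyhedron is the maximum of a generic objective
`c` or of `-c` on some face, given by at most `D / 2` of the inequalities tight there. Hence the
complex of all simultaneously tight sets is at most `2 ^ (D + 1)` times as large as its part of
sets of size at most `D / 2`. A generic perturbation `r + ε g` of the right-hand side `r` makes
every polyhedron with interior points simple without losing faces.

*Colours.* In dimension at most `2e + 2` it remains to count sets of size at most `e + 1`. Those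
with at least two colours number `O(∑_{i ≠ j} n_i n_j ^ e)`, since in a product of `e + 1` slice
sizes, not all of the same slice, all factors except one from a slice other than that of the largest
factor can be replaced by the largest. A set of a single colour `i` is tight for the system of the
slice `i` alone, but the slice spans an affine space of dimension at most `2e + 1` only, so the
bound for simple polyhedra gives `O(n_i ^ e)`. To see the slice in its own dimension, one recenters
the system at a point `o i` of the slice. This rescales `ε` by the slack of the functional at `o i`,
which does no harm because the complex of the slice system is constant for small `ε > 0`, and
because the slack is kept away from `0` by an extra inequality at each `o i`.

*Faces.* A face containing no whole slice has positive slack at the centroids of the slices. A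
face containing a whole slice is the polytope itself or its section by the hyperplane of that
slice.
-/

open Set Pointwise RealInnerProductSpace

/-- The dimension of the affine hull of a set. -/
noncomputable def adim {N : ℕ} (F : Set (EuclideanSpace ℝ (Fin N))) : ℕ :=
  Module.finrank ℝ (vectorSpan ℝ F)

/-- The number of `k`-dimensional nonempty exposed faces of `C`. -/
noncomputable def fCount {N : ℕ} (C : Set (EuclideanSpace ℝ (Fin N))) (k : ℕ) : ℕ :=
  {F : Set (EuclideanSpace ℝ (Fin N)) |
    IsExposed ℝ C F ∧ F.Nonempty ∧ adim F = k}.ncard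

open scoped Finset Topology

/-! ### Systems of linear inequalities -/

section Systems

variable {ι E : Type*} [AddCommGroup E] [Module ℝ E] {a : ι → E} {r : ι → ℝ}

/-- The polyhedron of functionals `z` with `z (a i) ≤ r i` for all `i`. The vectors `a i` are the
data and the functional is the unknown, as for supporting functionals of a given polytope. -/
def feasible (a : ι → E) (r : ι → ℝ) : Set (Module.Dual ℝ E) :=
  {z | ∀ i, z (a i) ≤ r i}

variable [Fintype ι]

open Classical in
/-- The set of inequalities `z (a i) ≤ r i` that hold with equality at `z`. -/
noncomputable def tightSet (a : ι → E) (r : ι → ℝ) (z : Module.Dual ℝ E) : Finset ι :=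
  {i | z (a i) = r i}

open Classical in
/-- The tight sets of all feasible functionals, one for each nonempty face of the polyhedron. -/
noncomputable def tightSets (a : ι → E) (r : ι → ℝ) : Finset (Finset ι) :=
  {T | ∃ z ∈ feasible a r, tightSet a r z = T}

open Classical in
/-- The simplicial complex of the sets of inequalities that are simultaneously tight at some
feasible functional. The empty set counts as a member if the system is feasible. -/
noncomputable def tightComplex (a : ι → E) (r : ι → ℝ) : Finset (Finset ι) :=
  {S | ∃ z ∈ feasible a r, S ⊆ tightSet a r z}

open Classical in
/-- The tight sets of the minimal faces of the polyhedron, which are its vertices when the `a i`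
span `E`. -/
noncomputable def vertexSets (a : ι → E) (r : ι → ℝ) : Finset (Finset ι) :=
  {B ∈ tightSets a r | Submodule.span ℝ (a '' B) = Submodule.span ℝ (range a)}

/-- The polyhedron `feasible a r` is simple: the vectors tight at any feasible functional are
linearly independent. -/
def IsSimple (a : ι → E) (r : ι → ℝ) : Prop :=
  ∀ z ∈ feasible a r, LinearIndepOn ℝ a (tightSet a r z : Set ι)

lemma mem_tightSet {z : Module.Dual ℝ E} {i : ι} : i ∈ tightSet a r z ↔ z (a i) = r i := by
  simp [tightSet]

lemma mem_tightSets {T : Finset ι} :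
    T ∈ tightSets a r ↔ ∃ z ∈ feasible a r, tightSet a r z = T := by
  simp [tightSets]

lemma mem_tightComplex {S : Finset ι} :
    S ∈ tightComplex a r ↔ ∃ z ∈ feasible a r, S ⊆ tightSet a r z := by
  simp [tightComplex]

lemma mem_vertexSets {B : Finset ι} :
    B ∈ vertexSets a r ↔
      B ∈ tightSets a r ∧ Submodule.span ℝ (a '' B) = Submodule.span ℝ (range a) := by
  simp [vertexSets]

lemma mem_tightComplex_of_subset {S S' : Finset ι} (hS : S ∈ tightComplex a r) (h : S' ⊆ S) :
    S' ∈ tightComplex a r := by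
  obtain ⟨z, hz, hSz⟩ := mem_tightComplex.1 hS
  exact mem_tightComplex.2 ⟨z, hz, h.trans hSz⟩

lemma tightSets_subset_tightComplex : tightSets a r ⊆ tightComplex a r := by
  intro T hT
  obtain ⟨z, hz, rfl⟩ := mem_tightSets.1 hT
  exact mem_tightComplex.2 ⟨z, hz, subset_rfl⟩

/-- The ratio test of the simplex method. -/
lemma exists_add_smul_mem_feasible {z f : Module.Dual ℝ E} (hz : z ∈ feasible a r)
    (hf : ∃ i, 0 < f (a i)) :
    ∃ t : ℝ, z + t • f ∈ feasible a r ∧ ∃ j, 0 < f (a j) ∧ j ∈ tightSet a r (z + t • f) := by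
  obtain ⟨i, hi⟩ := hf
  obtain ⟨j, hj, hmin⟩ := Finset.exists_min_image {j | 0 < f (a j)}
    (fun j => (r j - z (a j)) / f (a j)) ⟨i, by simpa using hi⟩
  simp only [Finset.mem_filter, Finset.mem_univ, true_and] at hj hmin
  have ht : 0 ≤ (r j - z (a j)) / f (a j) := div_nonneg (sub_nonneg.2 (hz j)) hj.le
  refine ⟨(r j - z (a j)) / f (a j), fun k => ?_, j, hj, mem_tightSet.2 ?_⟩
  · rw [LinearMap.add_apply, LinearMap.smul_apply, smul_eq_mul]
    rcases lt_or_ge 0 (f (a k)) with hk | hk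
    · linarith [(le_div_iff₀ hk).1 (hmin k hk)]
    · linarith [hz k, mul_nonpos_of_nonneg_of_nonpos ht hk]
  · rw [LinearMap.add_apply, LinearMap.smul_apply, smul_eq_mul, div_mul_cancel₀ _ hj.ne']
    ring

lemma exists_tightSet_ssubset {z : Module.Dual ℝ E} (hz : z ∈ feasible a r) {i : ι}
    (hi : a i ∉ Submodule.span ℝ (a '' (tightSet a r z))) :
    ∃ z' ∈ feasible a r, tightSet a r z ⊂ tightSet a r z' := by
  obtain ⟨f, hfi, hf⟩ : ∃ f : Module.Dual ℝ E, 0 < f (a i) ∧ ∀ j ∈ tightSet a r z, f (a j) = 0 := by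
    obtain ⟨f, hfi, hker⟩ := Submodule.exists_le_ker_of_notMem hi
    have hf : ∀ j ∈ tightSet a r z, f (a j) = 0 := fun j hj =>
      hker (Submodule.subset_span (mem_image_of_mem a hj))
    rcases lt_or_gt_of_ne hfi with h | h
    · exact ⟨-f, by simpa using h, fun j hj => by simp [hf j hj]⟩
    · exact ⟨f, h, hf⟩
  obtain ⟨t, hfeas, j, hj, hjt⟩ := exists_add_smul_mem_feasible hz ⟨i, hfi⟩
  refine ⟨z + t • f, hfeas, (Finset.ssubset_iff_of_subset fun k hk => ?_).2
    ⟨j, hjt, fun h => hj.ne' (hf j h)⟩⟩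
  simp [mem_tightSet, hf k hk, mem_tightSet.1 hk]

lemma exists_subset_mem_vertexSets {T : Finset ι} (hT : T ∈ tightSets a r) :
    ∃ B ∈ vertexSets a r, T ⊆ B := by
  obtain ⟨B, hTB, hB⟩ := (tightSets a r).exists_le_maximal hT
  obtain ⟨z, hz, rfl⟩ := mem_tightSets.1 hB.prop
  refine ⟨_, mem_vertexSets.2 ⟨hB.prop, ?_⟩, hTB⟩
  refine (Submodule.span_mono (image_subset_range _ _)).antisymm (Submodule.span_le.2 ?_)
  rintro _ ⟨i, rfl⟩
  by_contra hi
  obtain ⟨z', hz', hlt⟩ := exists_tightSet_ssubset hz hi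
  exact hB.not_gt (mem_tightSets.2 ⟨z', hz', rfl⟩) hlt

lemma tightSet_subset_of_span {z z' : Module.Dual ℝ E} {S : Finset ι}
    (hS : S ⊆ tightSet a r z) (hS' : S ⊆ tightSet a r z')
    (h : ∀ i ∈ tightSet a r z, a i ∈ Submodule.span ℝ (a '' S)) :
    tightSet a r z ⊆ tightSet a r z' := by
  have hle : Submodule.span ℝ (a '' S) ≤ LinearMap.eqLocus z z' := by
    rw [Submodule.span_le]
    rintro _ ⟨j, hj, rfl⟩
    exact (mem_tightSet.1 (hS hj)).trans (mem_tightSet.1 (hS' hj)).symm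
  exact fun i hi => mem_tightSet.2 ((hle (h i hi)).symm.trans (mem_tightSet.1 hi))

end Systems

/-! ### The upper bound theorem for simple polyhedra -/

section SimplePolyhedra

lemma exists_forall_notMem_of_ne_top {κ M : Type*} [Finite κ] [AddCommGroup M] [Module ℝ M]
    {p : κ → Submodule ℝ M} (hp : ∀ k, p k ≠ ⊤) : ∃ x, ∀ k, x ∉ p k := by
  by_contra! h
  obtain ⟨k, hk⟩ := Subspace.exists_eq_top_of_iUnion_eq_univ (iUnion_eq_univ_iff.2 h)
  exact hp k hk

variable {ι E : Type*} [AddCommGroup E] [Module ℝ E] {a : ι → E} {r : ι → ℝ} {c : E}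

/-- The vector `c` is a generic linear combination of the `a i`: it lies in no proper subspace of
their span that is spanned by some of them. It serves as a generic linear objective. -/
def IsGenericCombination (a : ι → E) (c : E) : Prop :=
  c ∈ Submodule.span ℝ (range a) ∧ ∀ S : Finset ι,
    c ∈ Submodule.span ℝ (a '' S) → Submodule.span ℝ (a '' S) = Submodule.span ℝ (range a)

open Classical in
/-- The coefficients of `c` are nonzero because otherwise `c` would lie in the span of a smaller
set. -/
lemma IsGenericCombination.exists_sum_eq (hc : IsGenericCombination a c) {B : Finset ι}
    (hB : LinearIndepOn ℝ a (B : Set ι))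
    (hspan : Submodule.span ℝ (a '' B) = Submodule.span ℝ (range a)) :
    ∃ l : ι → ℝ, ∑ b ∈ B, l b • a b = c ∧ ∀ b ∈ B, l b ≠ 0 := by
  obtain ⟨l, hl⟩ := Submodule.mem_span_image_finset_iff_exists_fun' ℝ |>.1 (hspan ▸ hc.1)
  refine ⟨l, hl, fun b hb hlb => ?_⟩
  have hmem : c ∈ Submodule.span ℝ (a '' (B.erase b : Finset ι)) := by
    rw [← hl, ← Finset.sum_erase B (a := b) (by simp [hlb])]
    exact Submodule.sum_mem _ fun i hi =>
      Submodule.smul_mem _ _ (Submodule.subset_span (mem_image_of_mem a hi))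
  have hb' := hB.notMem_span hb
  rw [← Finset.coe_erase, hc.2 _ hmem] at hb'
  exact hb' (Submodule.subset_span (mem_range_self b))

lemma exists_isGenericCombination [Finite ι] (a : ι → E) : ∃ c, IsGenericCombination a c := by
  have := Fintype.ofFinite ι
  let κ := {S : Finset ι // Submodule.span ℝ (a '' S) ≠ Submodule.span ℝ (range a)}
  obtain ⟨x, hx⟩ := exists_forall_notMem_of_ne_top (κ := κ)
    (p := fun S => (Submodule.span ℝ (a '' S.1)).comap (Fintype.linearCombination ℝ a)) fun S h =>
      S.2 ((Submodule.span_mono (image_subset_range _ _)).antisymm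
        ((Fintype.range_linearCombination ℝ a).symm.le.trans (LinearMap.range_le_iff_comap.2 h)))
  refine ⟨Fintype.linearCombination ℝ a x, ?_, fun S hS => ?_⟩
  · rw [← Fintype.range_linearCombination]
    exact LinearMap.mem_range_self _ x
  · by_contra h
    exact hx ⟨S, h⟩ hS

variable [Fintype ι]

lemma IsSimple.card_of_mem_vertexSets (h : IsSimple a r) {B : Finset ι} (hB : B ∈ vertexSets a r) :
    #B = Module.finrank ℝ (Submodule.span ℝ (range a)) := by
  obtain ⟨hBt, hspan⟩ := mem_vertexSets.1 hB
  obtain ⟨z, hz, rfl⟩ := mem_tightSets.1 hBt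
  have hcard := finrank_span_eq_card (h z hz)
  rw [← image_eq_range, hspan] at hcard
  simpa using hcard.symm

lemma apply_sub_apply_eq_sum {y : Module.Dual ℝ E} (z : Module.Dual ℝ E) {l : ι → ℝ}
    (hc : ∑ b ∈ tightSet a r y, l b • a b = c) :
    z c - y c = ∑ b ∈ tightSet a r y, l b * (z (a b) - r b) := by
  simp only [← hc, map_sum, map_smul, smul_eq_mul, ← Finset.sum_sub_distrib, mul_sub]
  exact Finset.sum_congr rfl fun b hb => by rw [mem_tightSet.1 hb]

lemma mul_sub_nonpos_of_negative_subset {z : Module.Dual ℝ E} (hz : z ∈ feasible a r) {l : ι → ℝ}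
    {B : Finset ι} (hneg : {b ∈ B | l b < 0} ⊆ tightSet a r z) {b : ι} (hb : b ∈ B) :
    l b * (z (a b) - r b) ≤ 0 := by
  rcases lt_or_ge (l b) 0 with h | h
  · have hbz := mem_tightSet.1 (hneg (Finset.mem_filter.2 ⟨hb, h⟩))
    simp [hbz]
  · exact mul_nonpos_of_nonneg_of_nonpos h (sub_nonpos.2 (hz b))

/-- Weak duality: if `c` is a combination of the vectors tight at `y`, then `y` maximizes `c` among
the feasible `z` that are tight wherever the coefficient is negative. -/
lemma apply_le_apply_of_negative_subset {y z : Module.Dual ℝ E} (hz : z ∈ feasible a r) {l : ι → ℝ}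
    (hc : ∑ b ∈ tightSet a r y, l b • a b = c)
    (hneg : {b ∈ tightSet a r y | l b < 0} ⊆ tightSet a r z) : z c ≤ y c := by
  rw [← sub_nonpos, apply_sub_apply_eq_sum z hc]
  exact Finset.sum_nonpos fun b hb => mul_sub_nonpos_of_negative_subset hz hneg hb

lemma tightSet_subset_of_apply_eq {y z : Module.Dual ℝ E} (hz : z ∈ feasible a r) {l : ι → ℝ}
    (hc : ∑ b ∈ tightSet a r y, l b • a b = c) (hl : ∀ b ∈ tightSet a r y, l b ≠ 0)
    (hneg : {b ∈ tightSet a r y | l b < 0} ⊆ tightSet a r z) (hzy : z c = y c) :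
    tightSet a r y ⊆ tightSet a r z := by
  intro b hb
  have hsum := apply_sub_apply_eq_sum z hc
  rw [sub_eq_zero.2 hzy, eq_comm, Finset.sum_eq_zero_iff_of_nonpos fun b hb =>
    mul_sub_nonpos_of_negative_subset hz hneg hb] at hsum
  exact mem_tightSet.2 (sub_eq_zero.1 ((mul_eq_zero.1 (hsum b hb)).resolve_left (hl b hb)))

lemma injOn_negative_vertexSets {l : Finset ι → ι → ℝ}
    (hc : ∀ B ∈ vertexSets a r, ∑ b ∈ B, l B b • a b = c)
    (hl : ∀ B ∈ vertexSets a r, ∀ b ∈ B, l B b ≠ 0) :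
    InjOn (fun B : Finset ι => ({b ∈ B | l B b < 0} : Finset ι)) (vertexSets a r) := by
  intro B hB B' hB' h
  obtain ⟨y, hy, rfl⟩ := mem_tightSets.1 (mem_vertexSets.1 hB).1
  obtain ⟨z, hz, rfl⟩ := mem_tightSets.1 (mem_vertexSets.1 hB').1
  have hyz := h.subset.trans (Finset.filter_subset _ _)
  have hzy := h.superset.trans (Finset.filter_subset _ _)
  have heq : z c = y c := (apply_le_apply_of_negative_subset hz (hc _ hB) hyz).antisymm
    (apply_le_apply_of_negative_subset hy (hc _ hB') hzy)
  exact (tightSet_subset_of_apply_eq hz (hc _ hB) (hl _ hB) hyz heq).antisymm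
    (tightSet_subset_of_apply_eq hy (hc _ hB') (hl _ hB') hzy heq.symm)

lemma card_vertexSets_filter_le {l : Finset ι → ι → ℝ}
    (hc : ∀ B ∈ vertexSets a r, ∑ b ∈ B, l B b • a b = c)
    (hl : ∀ B ∈ vertexSets a r, ∀ b ∈ B, l B b ≠ 0) (q : ℕ) :
    #{B ∈ vertexSets a r | #{b ∈ B | l B b < 0} ≤ q} ≤ #{U ∈ tightComplex a r | #U ≤ q} := by
  refine Finset.card_le_card_of_injOn (fun B => {b ∈ B | l B b < 0}) (fun B hB => ?_)
    ((injOn_negative_vertexSets hc hl).mono (Finset.coe_subset.2 (Finset.filter_subset _ _)))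
  obtain ⟨hB, hq⟩ := Finset.mem_filter.1 hB
  exact Finset.mem_filter.2 ⟨mem_tightComplex_of_subset
    (tightSets_subset_tightComplex (mem_vertexSets.1 hB).1) (Finset.filter_subset _ _), hq⟩

/-- Each vertex is the maximum or the minimum of a generic linear objective on a face of at least
half the dimension. -/
lemma IsSimple.card_vertexSets_le (h : IsSimple a r) :
    #(vertexSets a r) ≤ 2 * #{U ∈ tightComplex a r |
      #U ≤ Module.finrank ℝ (Submodule.span ℝ (range a)) / 2} := by
  classical
  obtain ⟨c, hc⟩ := exists_isGenericCombination a
  have hexists : ∀ B : Finset ι, ∃ l : ι → ℝ, B ∈ vertexSets a r →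
      ∑ b ∈ B, l b • a b = c ∧ ∀ b ∈ B, l b ≠ 0 := by
    intro B
    by_cases hB : B ∈ vertexSets a r
    · obtain ⟨hBt, hspan⟩ := mem_vertexSets.1 hB
      obtain ⟨z, hz, rfl⟩ := mem_tightSets.1 hBt
      exact (hc.exists_sum_eq (h z hz) hspan).imp fun _ hl _ => hl
    · exact ⟨0, fun h => absurd h hB⟩
  choose l hl using hexists
  set q := Module.finrank ℝ (Submodule.span ℝ (range a)) / 2
  have hcover : vertexSets a r ⊆ {B ∈ vertexSets a r | #{b ∈ B | l B b < 0} ≤ q} ∪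
      {B ∈ vertexSets a r | #{b ∈ B | (-l B) b < 0} ≤ q} := by
    intro B hB
    have hdisj : Disjoint {b ∈ B | l B b < 0} {b ∈ B | (-l B) b < 0} :=
      Finset.disjoint_filter.2 fun b _ h h' => by simp only [Pi.neg_apply] at h'; linarith
    have hcard := Finset.card_le_card (Finset.union_subset
      (Finset.filter_subset (fun b => l B b < 0) B)
      (Finset.filter_subset (fun b => (-l B) b < 0) B))
    rw [Finset.card_union_of_disjoint hdisj, h.card_of_mem_vertexSets hB] at hcard
    simp only [Finset.mem_union, Finset.mem_filter, hB, true_and]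
    omega
  have hpos := card_vertexSets_filter_le (fun B hB => (hl B hB).1) (fun B hB => (hl B hB).2) q
  have hneg := card_vertexSets_filter_le (a := a) (r := r) (c := -c) (l := -l)
    (fun B hB => by simp [Finset.sum_neg_distrib, (hl B hB).1])
    (fun B hB b hb => by simpa using (hl B hB).2 b hb) q
  have := (Finset.card_le_card hcover).trans (Finset.card_union_le _ _)
  simp only [Pi.neg_apply] at this hneg ⊢
  omega

/-- An asymptotic upper bound theorem, in the dual setting of simple polyhedra. -/
theorem IsSimple.card_tightComplex_le (h : IsSimple a r) :
    #(tightComplex a r) ≤ 2 ^ (Module.finrank ℝ (Submodule.span ℝ (range a)) + 1) *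
      #{U ∈ tightComplex a r | #U ≤ Module.finrank ℝ (Submodule.span ℝ (range a)) / 2} := by
  classical
  set D := Module.finrank ℝ (Submodule.span ℝ (range a))
  have hcover : tightComplex a r ⊆ (vertexSets a r).biUnion Finset.powerset := by
    intro S hS
    obtain ⟨z, hz, hSz⟩ := mem_tightComplex.1 hS
    obtain ⟨B, hB, hzB⟩ := exists_subset_mem_vertexSets (mem_tightSets.2 ⟨z, hz, rfl⟩)
    exact Finset.mem_biUnion.2 ⟨B, hB, Finset.mem_powerset.2 (hSz.trans hzB)⟩
  calc #(tightComplex a r) ≤ #((vertexSets a r).biUnion Finset.powerset) :=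
        Finset.card_le_card hcover
    _ ≤ #(vertexSets a r) * 2 ^ D := Finset.card_biUnion_le_card_mul _ _ _ fun B hB => by
        rw [Finset.card_powerset, h.card_of_mem_vertexSets hB]
    _ ≤ 2 * #{U ∈ tightComplex a r | #U ≤ D / 2} * 2 ^ D :=
        Nat.mul_le_mul_right _ h.card_vertexSets_le
    _ = 2 ^ (D + 1) * #{U ∈ tightComplex a r | #U ≤ D / 2} := by ring

end SimplePolyhedra

/-! ### Generic perturbations of the right-hand sides -/

section Perturbation

lemma eventually_mem_or_eventually_notMem_of_ordConnected {s : Set ℝ} (hs : s.OrdConnected)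
    (x : ℝ) : (∀ᶠ ε in 𝓝[>] x, ε ∈ s) ∨ ∀ᶠ ε in 𝓝[>] x, ε ∉ s := by
  refine or_iff_not_imp_right.2 fun h => ?_
  have hfreq : ∀ b > x, ∃ ε ∈ Ioo x b, ε ∈ s := fun b hb =>
    let ⟨ε, hε, hmem⟩ := ((Filter.not_eventually.1 h).and_eventually (Ioo_mem_nhdsGT hb)).exists
    ⟨ε, hmem, not_not.1 hε⟩
  obtain ⟨y, hxy, hy⟩ := hfreq (x + 1) (lt_add_one x)
  filter_upwards [Ioo_mem_nhdsGT hxy.1] with ε hε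
  obtain ⟨w, hw, hws⟩ := hfreq ε hε.1
  exact hs.out hws hy ⟨hw.2.le, hε.2.le⟩

variable {ι E : Type*} [AddCommGroup E] [Module ℝ E] {a : ι → E} {r g : ι → ℝ}

/-- The right-hand sides `g` for which the equations `z (a i) = g i`, `i ∈ T`, have a solution. -/
def solvableRHS (a : ι → E) (T : Finset ι) : Submodule ℝ (ι → ℝ) where
  carrier := {g | ∃ z : Module.Dual ℝ E, ∀ i ∈ T, z (a i) = g i}
  add_mem' := by
    rintro g g' ⟨z, hz⟩ ⟨z', hz'⟩
    exact ⟨z + z', fun i hi => by simp [hz i hi, hz' i hi]⟩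
  zero_mem' := ⟨0, fun i _ => by simp⟩
  smul_mem' := by
    rintro t g ⟨z, hz⟩
    exact ⟨t • z, fun i hi => by simp [hz i hi]⟩

/-- The right-hand side `g` is generic for `a`: only independent equations `z (a i) = g i` are
simultaneously solvable. -/
def IsGenericRHS (a : ι → E) (g : ι → ℝ) : Prop :=
  ∀ T : Finset ι, g ∈ solvableRHS a T → LinearIndepOn ℝ a (T : Set ι)

lemma IsGenericRHS.isSimple [Fintype ι] (h : IsGenericRHS a r) : IsSimple a r :=
  fun z _ => h _ ⟨z, fun _ => mem_tightSet.1⟩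

open Classical in
/-- The coefficients of a linear relation among the `a i` are not orthogonal to themselves. -/
lemma solvableRHS_ne_top {T : Finset ι} (hT : ¬ LinearIndepOn ℝ a (T : Set ι)) :
    solvableRHS a T ≠ ⊤ := by
  intro htop
  obtain ⟨f, hf, i, hi, hfi⟩ := not_linearIndepOn_finset_iff.1 hT
  obtain ⟨z, hz⟩ : f ∈ solvableRHS a T := htop ▸ Submodule.mem_top
  have hsum : ∑ i ∈ T, f i * f i = 0 := by
    rw [← map_zero z, ← hf, map_sum]
    exact Finset.sum_congr rfl fun i hi => by rw [map_smul, smul_eq_mul, hz i hi]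
  exact hfi (mul_self_eq_zero.1
    ((Finset.sum_eq_zero_iff_of_nonneg fun i _ => mul_self_nonneg (f i)).1 hsum i hi))

lemma exists_forall_isGenericRHS [Finite ι] {κ : Type*} [Finite κ] (A : κ → ι → E) :
    ∃ g : ι → ℝ, ∀ k, IsGenericRHS (A k) g := by
  obtain ⟨g, hg⟩ := exists_forall_notMem_of_ne_top
    (κ := {p : κ × Finset ι // ¬ LinearIndepOn ℝ (A p.1) (p.2 : Set ι)})
    (p := fun p => solvableRHS (A p.1.1) p.1.2) fun p => solvableRHS_ne_top p.2
  exact ⟨g, fun k T hT => not_not.1 fun h => hg ⟨(k, T), h⟩ hT⟩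

lemma IsGenericRHS.comp {ι' : Type*} (h : IsGenericRHS a g) (ψ : ι' ↪ ι) :
    IsGenericRHS (a ∘ ψ) (g ∘ ψ) := by
  rintro T ⟨z, hz⟩
  have hmap := h (T.map ψ) ⟨z, by simpa using hz⟩
  rw [Finset.coe_map] at hmap
  exact hmap.comp_of_image ψ.injective.injOn

lemma IsGenericRHS.eventually_add_smul [Finite ι] (h : IsGenericRHS a g) (r : ι → ℝ) :
    ∀ᶠ ε : ℝ in 𝓝[>] 0, IsGenericRHS a (r + ε • g) := by
  refine Filter.eventually_all.2 fun T => ?_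
  by_cases hT : LinearIndepOn ℝ a (T : Set ι)
  · exact Filter.Eventually.of_forall fun _ _ => hT
  have hbad : {ε : ℝ | r + ε • g ∈ solvableRHS a T}.Subsingleton := by
    intro ε hε ε' hε'
    by_contra hne
    have hsub : (ε - ε') • g ∈ solvableRHS a T := by
      convert (solvableRHS a T).sub_mem hε hε' using 1
      module
    exact hT (h T (((solvableRHS a T).smul_mem_iff (sub_ne_zero.2 hne)).1 hsub))
  have hle : 𝓝[>] (0 : ℝ) ≤ Filter.cofinite := (nhdsGT_le_nhdsNE 0).trans (nhdsNE_le_cofinite 0)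
  filter_upwards [hle hbad.finite.compl_mem_cofinite] with ε hε hmem using absurd hmem hε

lemma feasible_nonempty_of_forall_neg [Finite ι] {f : Module.Dual ℝ E} (hf : ∀ i, f (a i) < 0)
    (g : ι → ℝ) : (feasible a g).Nonempty := by
  obtain ⟨M, hM⟩ := (finite_range fun i => g i / f (a i)).bddAbove
  refine ⟨M • f, fun i => ?_⟩
  simpa using (div_le_iff_of_neg (hf i)).1 (hM (mem_range_self i))

variable [Fintype ι]

lemma eventually_add_smul_mem_feasible {z w : Module.Dual ℝ E} (hz : z ∈ feasible a r)
    (hw : ∀ i ∈ tightSet a r z, w (a i) ≤ g i) :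
    ∀ᶠ ε : ℝ in 𝓝[>] 0, z + ε • w ∈ feasible a (r + ε • g) := by
  refine Filter.eventually_all.2 fun i => ?_
  simp only [LinearMap.add_apply, LinearMap.smul_apply, Pi.add_apply, Pi.smul_apply, smul_eq_mul]
  rcases (hz i).eq_or_lt with hi | hi
  · filter_upwards [self_mem_nhdsWithin] with ε hε
    exact add_le_add hi.le (mul_le_mul_of_nonneg_left (hw i (mem_tightSet.2 hi)) (le_of_lt hε))
  · have hlim : ∀ᶠ ε in 𝓝 (0 : ℝ), z (a i) + ε * w (a i) < r i + ε * g i :=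
      ContinuousAt.eventually_lt (by fun_prop) (by fun_prop) (by simpa using hi)
    exact (hlim.filter_mono nhdsWithin_le_nhds).mono fun _ => le_of_lt

/-- The perturbed functional is `z + ε • w`, where `w` is a vertex of the system
`w (a i) ≤ g i`, `i ∈ T`, on the tight set `T` of `z`. -/
lemma exists_subset_tightSet_eventually_mem_tightComplex {y z : Module.Dual ℝ E}
    (hy : ∀ i, y (a i) < r i) (hz : z ∈ feasible a r) (g : ι → ℝ) :
    ∃ S ⊆ tightSet a r z, (∀ i ∈ tightSet a r z, a i ∈ Submodule.span ℝ (a '' S)) ∧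
      ∀ᶠ ε : ℝ in 𝓝[>] 0, S ∈ tightComplex a (r + ε • g) := by
  let a' : tightSet a r z → E := fun i => a i
  let g' : tightSet a r z → ℝ := fun i => g i
  obtain ⟨w₀, hw₀⟩ := feasible_nonempty_of_forall_neg (a := a') (f := y - z)
    (fun i => by simpa [a', mem_tightSet.1 i.2] using hy i) g'
  obtain ⟨B, hB, -⟩ := exists_subset_mem_vertexSets (mem_tightSets.2 ⟨w₀, hw₀, rfl⟩)
  obtain ⟨hBt, hspan⟩ := mem_vertexSets.1 hB
  obtain ⟨w, hw, rfl⟩ := mem_tightSets.1 hBt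
  refine ⟨(tightSet a' g' w).map (Function.Embedding.subtype _), ?_, fun i hi => ?_, ?_⟩
  · exact Finset.map_subtype_subset _
  · rw [Finset.coe_map, image_image]
    exact hspan.ge (Submodule.subset_span ⟨⟨i, hi⟩, rfl⟩)
  · filter_upwards [eventually_add_smul_mem_feasible hz fun i hi => hw ⟨i, hi⟩] with ε hε
    refine mem_tightComplex.2 ⟨_, hε, fun i hi => mem_tightSet.2 ?_⟩
    obtain ⟨j, hj, rfl⟩ := Finset.mem_map.1 hi
    have hwj : w (a j) = g j := mem_tightSet (a := a') (r := g') |>.1 hj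
    simp [hwj, mem_tightSet.1 j.2]

lemma eventually_card_tightSets_le {y : Module.Dual ℝ E} (hy : ∀ i, y (a i) < r i) (g : ι → ℝ) :
    ∀ᶠ ε : ℝ in 𝓝[>] 0, #(tightSets a r) ≤ #(tightComplex a (r + ε • g)) := by
  have hexists : ∀ T ∈ tightSets a r, ∃ S ⊆ T, (∀ i ∈ T, a i ∈ Submodule.span ℝ (a '' S)) ∧
      ∀ᶠ ε : ℝ in 𝓝[>] 0, S ∈ tightComplex a (r + ε • g) := by
    intro T hT
    obtain ⟨z, hz, rfl⟩ := mem_tightSets.1 hT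
    exact exists_subset_tightSet_eventually_mem_tightComplex hy hz g
  choose! S hST hspan hS using hexists
  have hsub : ∀ T ∈ tightSets a r, ∀ T' ∈ tightSets a r, S T = S T' → T ⊆ T' := by
    intro T hT T' hT' h
    have hST' := hST T' hT'
    rw [← h] at hST'
    have hsT := hspan T hT
    have hTs := hST T hT
    obtain ⟨z, -, rfl⟩ := mem_tightSets.1 hT
    obtain ⟨z', -, rfl⟩ := mem_tightSets.1 hT'
    exact tightSet_subset_of_span hTs hST' hsT
  filter_upwards [(Filter.eventually_all_finset _).2 hS] with ε hε
  exact Finset.card_le_card_of_injOn S hε fun T hT T' hT' h =>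
    (hsub T hT T' hT' h).antisymm (hsub T' hT' T hT h.symm)

lemma convex_setOf_mem_tightComplex (a : ι → E) (S : Finset ι) :
    Convex ℝ {r | S ∈ tightComplex a r} := by
  intro r hr r' hr' s t hs ht _
  obtain ⟨z, hz, hSz⟩ := mem_tightComplex.1 hr
  obtain ⟨z', hz', hSz'⟩ := mem_tightComplex.1 hr'
  refine mem_tightComplex.2 ⟨s • z + t • z', fun i => ?_, fun i hi => mem_tightSet.2 ?_⟩
  · exact add_le_add (mul_le_mul_of_nonneg_left (hz i) hs) (mul_le_mul_of_nonneg_left (hz' i) ht)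
  · simp [mem_tightSet.1 (hSz hi), mem_tightSet.1 (hSz' hi)]

lemma exists_eventually_tightComplex_eq (a : ι → E) (r g : ι → ℝ) :
    ∃ Δ, ∀ᶠ ε : ℝ in 𝓝[>] 0, tightComplex a (r + ε • g) = Δ := by
  classical
  have hS : ∀ S : Finset ι, ∃ p : Prop, ∀ᶠ ε : ℝ in 𝓝[>] 0, S ∈ tightComplex a (r + ε • g) ↔ p := by
    intro S
    have hconv : {ε : ℝ | S ∈ tightComplex a (r + ε • g)}.OrdConnected := by
      have := (convex_setOf_mem_tightComplex a S).affine_preimage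
        (AffineMap.lineMap r (r + g) : ℝ →ᵃ[ℝ] ι → ℝ)
      simpa [preimage, AffineMap.lineMap_apply, add_comm] using this.ordConnected
    rcases eventually_mem_or_eventually_notMem_of_ordConnected hconv 0 with h | h
    · exact ⟨True, h.mono fun _ h => iff_true_intro h⟩
    · exact ⟨False, h.mono fun _ h => iff_false_intro h⟩
  choose p hp using hS
  refine ⟨Finset.univ.filter p, (Filter.eventually_all.2 hp).mono fun ε hε => ?_⟩
  ext S
  simpa using hε S

end Perturbation

/-! ### Counting small subsets -/

section Counting

lemma exists_image_univ_eq {α : Type*} [DecidableEq α] {e : ℕ} {U : Finset α} (hU : U.Nonempty)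
    (hcard : #U ≤ e) : ∃ f : Fin e → α, Finset.univ.image f = U := by
  have : Nonempty U := hU.to_subtype
  obtain ⟨φ⟩ : Nonempty (U ↪ Fin e) := Function.Embedding.nonempty_of_card_le (by simpa using hcard)
  obtain ⟨f, hf⟩ : ∃ f : Fin e → U, f.Surjective :=
    ⟨Function.invFun φ, (Function.leftInverse_invFun φ.injective).surjective⟩
  refine ⟨fun k => f k, ?_⟩
  rw [← Finset.coe_inj, Finset.coe_image, Finset.coe_univ, image_univ, range_comp' Subtype.val,
    hf.range_eq, image_univ, Subtype.range_coe]

lemma card_finset_card_le {α : Type*} [Fintype α] [Nonempty α] (e : ℕ) :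
    #{U : Finset α | #U ≤ e} ≤ 2 * Fintype.card α ^ e := by
  classical
  have hcover : ({U | #U ≤ e} : Finset (Finset α)) ⊆
      insert ∅ (Finset.univ.image fun f : Fin e → α => Finset.univ.image f) := by
    intro U hU
    rcases U.eq_empty_or_nonempty with rfl | hne
    · exact Finset.mem_insert_self _ _
    · obtain ⟨f, hf⟩ := exists_image_univ_eq hne (Finset.mem_filter.1 hU).2
      exact Finset.mem_insert_of_mem (Finset.mem_image.2 ⟨f, Finset.mem_univ _, hf⟩)
  calc #{U : Finset α | #U ≤ e}
      ≤ #(Finset.univ.image fun f : Fin e → α => Finset.univ.image f) + 1 :=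
        (Finset.card_le_card hcover).trans (Finset.card_insert_le _ _)
    _ ≤ Fintype.card α ^ e + Fintype.card α ^ e := by
        gcongr
        · exact Finset.card_image_le.trans (by simp)
        · exact Nat.one_le_pow _ _ Fintype.card_pos
    _ = 2 * Fintype.card α ^ e := (two_mul _).symm

variable {σ : Type*} [Fintype σ] [DecidableEq σ]

/-- The sum `∑_{i ≠ j} n i * (n j) ^ e` of the upper bound. -/
def crossSum (n : σ → ℕ) (e : ℕ) : ℕ :=
  ∑ i, ∑ j, if i ≠ j then n i * n j ^ e else 0

lemma mul_pow_le_crossSum (n : σ → ℕ) (e : ℕ) {i j : σ} (h : i ≠ j) :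
    n i * n j ^ e ≤ crossSum n e :=
  calc n i * n j ^ e = if i ≠ j then n i * n j ^ e else 0 := (if_pos h).symm
    _ ≤ ∑ j, if i ≠ j then n i * n j ^ e else 0 :=
        Finset.single_le_sum_of_canonicallyOrdered
          (f := fun j => if i ≠ j then n i * n j ^ e else 0) (Finset.mem_univ j)
    _ ≤ crossSum n e :=
        Finset.single_le_sum_of_canonicallyOrdered
          (f := fun i => ∑ j, if i ≠ j then n i * n j ^ e else 0) (Finset.mem_univ i)

lemma pow_le_crossSum [Nontrivial σ] {n : σ → ℕ} (hn : ∀ i, 0 < n i) (e : ℕ) (j : σ) :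
    n j ^ e ≤ crossSum n e :=
  have ⟨i, hi⟩ := exists_ne j
  (Nat.le_mul_of_pos_left _ (hn i)).trans (mul_pow_le_crossSum n e hi)

lemma crossSum_le_of_le_two_mul {n n' : σ → ℕ} (h : ∀ i, n' i ≤ 2 * n i) (e : ℕ) :
    crossSum n' e ≤ 2 ^ (e + 1) * crossSum n e := by
  simp only [crossSum, Finset.mul_sum, mul_ite, mul_zero]
  gcongr with i _ j _
  split_ifs
  · calc n' i * n' j ^ e ≤ 2 * n i * (2 * n j) ^ e := by gcongr <;> exact h _
      _ = 2 ^ (e + 1) * (n i * n j ^ e) := by ring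
  · exact le_rfl

lemma prod_le_crossSum {n : σ → ℕ} {e : ℕ} {φ : Fin (e + 1) → σ} (hφ : ∀ i, ∃ k, φ k ≠ i) :
    ∏ k, n (φ k) ≤ crossSum n e := by
  obtain ⟨k₀, hmax⟩ := Finite.exists_max fun k => n (φ k)
  obtain ⟨k₁, hk₁⟩ := hφ (φ k₀)
  calc ∏ k, n (φ k) = n (φ k₁) * ∏ k ∈ Finset.univ.erase k₁, n (φ k) :=
        (Finset.mul_prod_erase _ _ (Finset.mem_univ k₁)).symm
    _ ≤ n (φ k₁) * n (φ k₀) ^ #(Finset.univ.erase k₁) := by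
        gcongr
        exact Finset.prod_le_pow_card _ _ _ fun k _ => hmax k
    _ = n (φ k₁) * n (φ k₀) ^ e := by simp
    _ ≤ crossSum n e := mul_pow_le_crossSum n e hk₁

open Classical in
lemma card_multicolored_le [Nonempty σ] (β : σ → Type*) [∀ i, Fintype (β i)] (e : ℕ) :
    #{U : Finset (Σ i, β i) | #U ≤ e + 1 ∧ ∀ i, ∃ x ∈ U, x.1 ≠ i} ≤
      Fintype.card σ ^ (e + 1) * crossSum (fun i => Fintype.card (β i)) e := by
  let Φ : Finset (Fin (e + 1) → σ) := {φ | ∀ i, ∃ k, φ k ≠ i}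
  let img (φ : Fin (e + 1) → σ) (f : ∀ k, β (φ k)) : Finset (Σ i, β i) :=
    Finset.univ.image fun k => ⟨φ k, f k⟩
  have hcover : ({U | #U ≤ e + 1 ∧ ∀ i, ∃ x ∈ U, x.1 ≠ i} : Finset (Finset (Σ i, β i))) ⊆
      Φ.biUnion fun φ => Finset.univ.image (img φ) := by
    intro U hU
    obtain ⟨hcard, hcol⟩ := (Finset.mem_filter.1 hU).2
    obtain ⟨x₀, hx₀, -⟩ := hcol (Classical.arbitrary σ)
    obtain ⟨f, rfl⟩ := exists_image_univ_eq ⟨x₀, hx₀⟩ hcard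
    refine Finset.mem_biUnion.2 ⟨fun k => (f k).1, ?_,
      Finset.mem_image.2 ⟨fun k => (f k).2, Finset.mem_univ _, rfl⟩⟩
    simpa [Φ] using hcol
  calc _ ≤ #(Φ.biUnion fun φ => Finset.univ.image (img φ)) := Finset.card_le_card hcover
    _ ≤ #Φ * crossSum (fun i => Fintype.card (β i)) e :=
        Finset.card_biUnion_le_card_mul _ _ _ fun φ hφ =>
          calc #(Finset.univ.image (img φ)) ≤ Fintype.card (∀ k, β (φ k)) := Finset.card_image_le
            _ = ∏ k, Fintype.card (β (φ k)) := Fintype.card_pi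
            _ ≤ _ := prod_le_crossSum (n := fun i => Fintype.card (β i)) (Finset.mem_filter.1 hφ).2
    _ ≤ Fintype.card σ ^ (e + 1) * crossSum (fun i => Fintype.card (β i)) e := by
        gcongr
        exact (Finset.card_le_univ _).trans (by simp)

end Counting

/-! ### A coloured upper bound theorem -/

section Recentering

variable {ι E : Type*} [AddCommGroup E] [Module ℝ E] {a : ι → E} {g : ι → ℝ} {p : E}
  {y : Module.Dual ℝ E}

lemma inv_smul_apply_sub {M : ℝ} (hp : y p ≠ M) (x : E) :
    ((M - y p)⁻¹ • y) (x - p) = 1 + (M - y p)⁻¹ * (y x - M) := by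
  have : M - y p ≠ 0 := sub_ne_zero.2 hp.symm
  rw [LinearMap.smul_apply, map_sub, smul_eq_mul]
  field_simp
  ring

lemma inv_smul_mem_feasible {ε : ℝ} (hp : y p < 1) (hy : y ∈ feasible a (1 + ε • g)) :
    (1 - y p)⁻¹ • y ∈ feasible (fun i => a i - p) (1 + (ε / (1 - y p)) • g) := by
  intro i
  have hq : 0 ≤ (1 - y p)⁻¹ := inv_nonneg.2 (sub_pos.2 hp).le
  have hi : y (a i) - 1 ≤ ε * g i := sub_le_iff_le_add'.2 (hy i)
  rw [inv_smul_apply_sub hp.ne]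
  calc 1 + (1 - y p)⁻¹ * (y (a i) - 1) ≤ 1 + (1 - y p)⁻¹ * (ε * g i) :=
        add_le_add_right (mul_le_mul_of_nonneg_left hi hq) 1
    _ = 1 + ε / (1 - y p) * g i := by ring

lemma tightSet_subset_tightSet_inv_smul [Fintype ι] {ε : ℝ} (hp : y p ≠ 1) :
    tightSet a (1 + ε • g) y ⊆
      tightSet (fun i => a i - p) (1 + (ε / (1 - y p)) • g) ((1 - y p)⁻¹ • y) := by
  intro i hi
  have hi : y (a i) = 1 + ε * g i := mem_tightSet.1 hi
  rw [mem_tightSet, inv_smul_apply_sub hp, hi]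
  simp only [Pi.add_apply, Pi.one_apply, Pi.smul_apply, smul_eq_mul]
  ring

end Recentering

lemma eventually_forall_div_of_eventually {p : ℝ → Prop} (hp : ∀ᶠ ε in 𝓝[>] 0, p ε) {s : ℝ}
    (hs : 0 < s) : ∀ᶠ ε in 𝓝[>] 0, ∀ q, s ≤ q → p (ε / q) := by
  obtain ⟨δ, hδ, hsub⟩ := mem_nhdsGT_iff_exists_Ioo_subset.1 hp
  filter_upwards [Ioo_mem_nhdsGT (mul_pos hδ hs)] with ε hε q hq
  have hq0 : 0 < q := hs.trans_le hq
  exact hsub ⟨div_pos hε.1 hq0,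
    (div_lt_iff₀ hq0).2 (hε.2.trans_le (mul_le_mul_of_nonneg_left hq (le_of_lt hδ)))⟩

section SmallDimension

variable {ι E : Type*} [Fintype ι] [AddCommGroup E] [Module ℝ E] {a : ι → E} {r g : ι → ℝ} {D : ℕ}

lemma IsSimple.card_tightComplex_le_of_finrank_le (h : IsSimple a r)
    (hD : Module.finrank ℝ (Submodule.span ℝ (range a)) ≤ D) :
    #(tightComplex a r) ≤ 2 ^ (D + 1) * #{U ∈ tightComplex a r | #U ≤ D / 2} := by
  refine h.card_tightComplex_le.trans ?_
  gcongr
  exact one_le_two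

lemma IsGenericRHS.exists_eventually_tightComplex_eq [Nonempty ι] (hg : IsGenericRHS a g)
    (r : ι → ℝ) (hD : Module.finrank ℝ (Submodule.span ℝ (range a)) ≤ D) :
    ∃ Δ : Finset (Finset ι), #Δ ≤ 2 ^ (D + 2) * Fintype.card ι ^ (D / 2) ∧
      ∀ᶠ ε : ℝ in 𝓝[>] 0, tightComplex a (r + ε • g) = Δ := by
  obtain ⟨Δ, hΔ⟩ := _root_.exists_eventually_tightComplex_eq a r g
  refine ⟨Δ, ?_, hΔ⟩
  obtain ⟨ε, rfl, hε⟩ := (hΔ.and (hg.eventually_add_smul r)).exists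
  calc #(tightComplex a (r + ε • g))
      ≤ 2 ^ (D + 1) * #{U ∈ tightComplex a (r + ε • g) | #U ≤ D / 2} :=
        hε.isSimple.card_tightComplex_le_of_finrank_le hD
    _ ≤ 2 ^ (D + 1) * #{U : Finset ι | #U ≤ D / 2} := by
        gcongr
        exact Finset.subset_univ _
    _ ≤ 2 ^ (D + 1) * (2 * Fintype.card ι ^ (D / 2)) := by
        gcongr
        exact card_finset_card_le _
    _ = 2 ^ (D + 2) * Fintype.card ι ^ (D / 2) := by ring

end SmallDimension

section Colored

variable {σ : Type*} {κ : σ → Type*}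

section Families

variable [∀ i, Fintype (κ i)]

open Classical in
/-- The members of `U` of colour `i` other than the extra element `none` of that colour. -/
noncomputable def colorTrace (i : σ) (U : Finset (Σ i, Option (κ i))) : Finset (κ i) :=
  {v | ⟨i, some v⟩ ∈ U}

lemma mem_colorTrace {i : σ} {U : Finset (Σ i, Option (κ i))} {v : κ i} :
    v ∈ colorTrace i U ↔ ⟨i, some v⟩ ∈ U := by
  simp [colorTrace]

variable {C : Finset (Finset (Σ i, Option (κ i)))}

open Classical in
/-- A member of colour `i` is given by its trace and by whether it contains `none`. -/
lemma card_le_of_monochromatic {i : σ} {Δ : Finset (Finset (κ i))}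
    (hC : ∀ U ∈ C, ∀ x ∈ U, x.1 = i) (hΔ : ∀ U ∈ C, colorTrace i U ∈ Δ) : #C ≤ 2 * #Δ := by
  rw [← Fintype.card_bool, ← Finset.card_univ, ← Finset.card_product]
  refine Finset.card_le_card_of_injOn
    (fun U => (decide (⟨i, none⟩ ∈ U), colorTrace i U)) (fun U hU => ?_) fun U hU U' hU' h => ?_
  · exact Finset.mem_product.2 ⟨Finset.mem_univ _, hΔ U hU⟩
  · obtain ⟨hnone, htrace⟩ := Prod.mk.inj h
    have hfiber : ∀ w : Option (κ i), (⟨i, w⟩ ∈ U ↔ ⟨i, w⟩ ∈ U')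
      | none => decide_eq_decide.1 hnone
      | some v => by rw [← mem_colorTrace, ← mem_colorTrace, htrace]
    ext ⟨j, w⟩
    constructor
    · intro hw
      obtain rfl : j = i := hC U hU _ hw
      exact (hfiber w).1 hw
    · intro hw
      obtain rfl : j = i := hC U' hU' _ hw
      exact (hfiber w).2 hw

open Classical in
lemma card_filter_card_le_of_colorTrace [Fintype σ] [DecidableEq σ] [Nontrivial σ]
    [∀ i, Nonempty (κ i)] {e K : ℕ}
    {Δ : ∀ i, Finset (Finset (κ i))} (hΔ : ∀ i, ∀ U ∈ C, colorTrace i U ∈ Δ i)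
    (hcard : ∀ i, #(Δ i) ≤ K * Fintype.card (κ i) ^ e) :
    #{U ∈ C | #U ≤ e + 1} ≤ ((2 * Fintype.card σ) ^ (e + 1) + Fintype.card σ * (2 * K)) *
      crossSum (fun i => Fintype.card (κ i)) e := by
  have hcover : {U ∈ C | #U ≤ e + 1} ⊆
      ({U | #U ≤ e + 1 ∧ ∀ i, ∃ x ∈ U, x.1 ≠ i} : Finset (Finset (Σ i, Option (κ i)))) ∪
        Finset.univ.biUnion fun i => {U ∈ C | ∀ x ∈ U, x.1 = i} := by
    intro U hU
    simp only [Finset.mem_filter, Finset.mem_union, Finset.mem_biUnion, Finset.mem_univ,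
      true_and] at hU ⊢
    refine or_iff_not_imp_left.2 fun h => ?_
    push Not at h
    exact (h hU.2).imp fun i hi => ⟨hU.1, hi⟩
  have hmulti := calc
    #{U : Finset (Σ i, Option (κ i)) | #U ≤ e + 1 ∧ ∀ i, ∃ x ∈ U, x.1 ≠ i}
      ≤ Fintype.card σ ^ (e + 1) * crossSum (fun i => Fintype.card (Option (κ i))) e :=
        card_multicolored_le _ e
    _ ≤ Fintype.card σ ^ (e + 1) * (2 ^ (e + 1) * crossSum (fun i => Fintype.card (κ i)) e) := by
        gcongr
        refine crossSum_le_of_le_two_mul (fun i => ?_) e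
        rw [Fintype.card_option, two_mul]
        gcongr
        exact Fintype.card_pos
  have hmono : #(Finset.univ.biUnion fun i => {U ∈ C | ∀ x ∈ U, x.1 = i}) ≤
      Fintype.card σ * (2 * (K * crossSum (fun i => Fintype.card (κ i)) e)) := by
    refine Finset.card_biUnion_le_card_mul _ _ _ fun i _ => ?_
    refine (card_le_of_monochromatic (fun U hU => (Finset.mem_filter.1 hU).2)
      fun U hU => hΔ i U (Finset.mem_filter.1 hU).1).trans ?_
    gcongr
    refine (hcard i).trans ?_
    gcongr
    exact pow_le_crossSum (fun i => Fintype.card_pos) e i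
  calc #{U ∈ C | #U ≤ e + 1} ≤ _ := (Finset.card_le_card hcover).trans (Finset.card_union_le _ _)
    _ ≤ _ := add_le_add hmulti hmono
    _ = _ := by rw [mul_pow]; ring

end Families

variable {E : Type*} [AddCommGroup E] [Module ℝ E] {a : (Σ i, κ i) → E} {o : σ → E}

/-- The vectors of the system consisting of `z (a x) ≤ 1` for all `x` and `z (o i) ≤ 1 - s` for all
colours `i`, where `o i` is regarded as an extra element of colour `i`. -/
def extendedVec (a : (Σ i, κ i) → E) (o : σ → E) (x : Σ i, Option (κ i)) : E :=
  x.2.elim (o x.1) fun v => a ⟨x.1, v⟩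

/-- The right-hand sides of the system with vectors `extendedVec a o`. -/
def extendedRHS (s : ℝ) (x : Σ i, Option (κ i)) : ℝ :=
  x.2.elim (1 - s) fun _ => 1

lemma mem_feasible_extended {s : ℝ} {z : Module.Dual ℝ E} :
    z ∈ feasible (extendedVec a o) (extendedRHS s) ↔ z ∈ feasible a 1 ∧ ∀ i, z (o i) ≤ 1 - s := by
  simp [feasible, extendedVec, extendedRHS, Sigma.forall, Option.forall, forall_and, and_comm]

lemma exists_forall_isGenericRHS_extended [Finite σ] [∀ i, Finite (κ i)] (a : (Σ i, κ i) → E)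
    (o : σ → E) :
    ∃ g : (Σ i, Option (κ i)) → ℝ, IsGenericRHS (extendedVec a o) g ∧
      ∀ i, IsGenericRHS (fun v => a ⟨i, v⟩ - o i) fun v => g ⟨i, some v⟩ := by
  obtain ⟨g, hg⟩ := exists_forall_isGenericRHS fun k : Option σ =>
    k.elim (extendedVec a o) fun i x => extendedVec a o x - o i
  exact ⟨g, hg none, fun i => (hg (some i)).comp
    ⟨fun v => ⟨i, some v⟩, fun v w h => by simpa using h⟩⟩

variable [Fintype σ] [∀ i, Fintype (κ i)]

open Classical in
/-- The tight sets of the functionals `z ≤ 1` on the `a x` that are less than `1` at each `o i`. -/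
noncomputable def strictTightSets (a : (Σ i, κ i) → E) (o : σ → E) : Finset (Finset (Σ i, κ i)) :=
  {T | ∃ z ∈ feasible a 1, (∀ i, z (o i) < 1) ∧ tightSet a 1 z = T}

lemma mem_strictTightSets {T : Finset (Σ i, κ i)} :
    T ∈ strictTightSets a o ↔ ∃ z ∈ feasible a 1, (∀ i, z (o i) < 1) ∧ tightSet a 1 z = T := by
  simp [strictTightSets]

lemma eventually_card_strictTightSets_le (a : (Σ i, κ i) → E) (o : σ → E) :
    ∀ᶠ s : ℝ in 𝓝[>] 0,
      #(strictTightSets a o) ≤ #(tightSets (extendedVec a o) (extendedRHS s)) := by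
  classical
  have hT : ∀ T ∈ strictTightSets a o, ∀ᶠ s : ℝ in 𝓝[>] 0,
      ∃ B ∈ tightSets (extendedVec a o) (extendedRHS s),
        Finset.univ.sigma (colorTrace · B) = T := by
    intro T hT
    obtain ⟨z, hz, hzo, rfl⟩ := mem_strictTightSets.1 hT
    have hslack : ∀ᶠ s : ℝ in 𝓝 0, ∀ i, s < 1 - z (o i) :=
      Filter.eventually_all.2 fun i => gt_mem_nhds (sub_pos.2 (hzo i))
    filter_upwards [nhdsWithin_le_nhds hslack] with s hs
    refine ⟨_, mem_tightSets.2 ⟨z, mem_feasible_extended.2 ⟨hz, fun i => ?_⟩, rfl⟩, ?_⟩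
    · linarith [hs i]
    · ext ⟨i, v⟩
      simp [mem_colorTrace, mem_tightSet, extendedVec, extendedRHS]
  filter_upwards [(Filter.eventually_all_finset _).2 hT] with s hs
  exact Finset.card_le_card_of_surjOn (fun B => Finset.univ.sigma (colorTrace · B)) hs

/-- By the slack at `o i`, the system of colour `i` can be recentered at `o i`. -/
lemma colorTrace_mem_tightComplex {s ε : ℝ} {g : (Σ i, Option (κ i)) → ℝ} {i : σ}
    (hs : 0 < s) (hε : ε * g ⟨i, none⟩ ≤ s / 2) {U : Finset (Σ i, Option (κ i))}
    (hU : U ∈ tightComplex (extendedVec a o) (extendedRHS s + ε • g)) :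
    ∃ q, s / 2 ≤ q ∧ colorTrace i U ∈ tightComplex (fun v => a ⟨i, v⟩ - o i)
      (1 + (ε / q) • fun v => g ⟨i, some v⟩) := by
  obtain ⟨y, hy, hUy⟩ := mem_tightComplex.1 hU
  have hslack : y (o i) ≤ 1 - s + ε * g ⟨i, none⟩ := hy ⟨i, none⟩
  have hyi : y ∈ feasible (fun v => a ⟨i, v⟩) (1 + ε • fun v => g ⟨i, some v⟩) :=
    fun v => hy ⟨i, some v⟩
  have hlt : y (o i) < 1 := by linarith
  refine ⟨1 - y (o i), by linarith, mem_tightComplex.2 ⟨_, inv_smul_mem_feasible hlt hyi, ?_⟩⟩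
  refine Subset.trans (fun v hv => ?_) (tightSet_subset_tightSet_inv_smul hlt.ne)
  exact mem_tightSet.2 (mem_tightSet.1 (hUy (mem_colorTrace.1 hv)))

/-- The factor in the upper bound theorem for `m` colours. Of the two summands, the first comes from
the small sets with several colours and the second from those with one colour. -/
def coloredConst (m e : ℕ) : ℕ :=
  2 ^ (2 * e + 3) * ((2 * m) ^ (e + 1) + m * (2 * 2 ^ (2 * e + 3)))

theorem card_strictTightSets_le [DecidableEq σ] [Nontrivial σ] [∀ i, Nonempty (κ i)]
    [FiniteDimensional ℝ E] {e : ℕ} (hE : Module.finrank ℝ E ≤ 2 * e + 2)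
    (hcolor : ∀ i,
      Module.finrank ℝ (Submodule.span ℝ (range fun v => a ⟨i, v⟩ - o i)) ≤ 2 * e + 1) :
    #(strictTightSets a o) ≤
      coloredConst (Fintype.card σ) e * crossSum (fun i => Fintype.card (κ i)) e := by
  obtain ⟨g, hg, hgi⟩ := exists_forall_isGenericRHS_extended a o
  choose Δ hcard hΔ using fun i => (hgi i).exists_eventually_tightComplex_eq 1 (hcolor i)
  have hsmall : ∀ᶠ s : ℝ in 𝓝[>] 0, s ∈ Ioo 0 1 := Ioo_mem_nhdsGT one_pos
  obtain ⟨s, ⟨hs0, hs1⟩, hs⟩ := (hsmall.and (eventually_card_strictTightSets_le a o)).exists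
  have hpos : ∀ x, (0 : Module.Dual ℝ E) (extendedVec a o x) < extendedRHS s x := by
    rintro ⟨i, _ | _⟩
    · exact sub_pos.2 hs1
    · exact one_pos
  have hslack : ∀ᶠ ε : ℝ in 𝓝[>] 0, ∀ i, ε * g ⟨i, none⟩ ≤ s / 2 := by
    refine nhdsWithin_le_nhds (Filter.eventually_all.2 fun i => ?_)
    exact (ContinuousAt.eventually_lt (f := fun ε => ε * g ⟨i, none⟩) (g := fun _ => s / 2)
      (by fun_prop) (by fun_prop) (by simpa using hs0)).mono fun _ => le_of_lt
  have hstable : ∀ᶠ ε : ℝ in 𝓝[>] 0, ∀ i q, s / 2 ≤ q →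
      tightComplex (fun v => a ⟨i, v⟩ - o i) (1 + (ε / q) • fun v => g ⟨i, some v⟩) = Δ i :=
    Filter.eventually_all.2 fun i => eventually_forall_div_of_eventually (hΔ i) (half_pos hs0)
  obtain ⟨ε, ⟨⟨hle, hgen⟩, hε⟩, hεΔ⟩ := (((eventually_card_tightSets_le hpos g).and
    (hg.eventually_add_smul _)).and hslack |>.and hstable).exists
  have htrace : ∀ i, ∀ U ∈ tightComplex (extendedVec a o) (extendedRHS s + ε • g),
      colorTrace i U ∈ Δ i := by
    intro i U hU
    obtain ⟨q, hq, hmem⟩ := colorTrace_mem_tightComplex hs0 (hε i) hU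
    exact hεΔ i q hq ▸ hmem
  calc #(strictTightSets a o)
      ≤ #(tightComplex (extendedVec a o) (extendedRHS s + ε • g)) := hs.trans hle
    _ ≤ 2 ^ (2 * e + 3) *
          #{U ∈ tightComplex (extendedVec a o) (extendedRHS s + ε • g) | #U ≤ (2 * e + 2) / 2} :=
        hgen.isSimple.card_tightComplex_le_of_finrank_le ((Submodule.finrank_le _).trans hE)
    _ ≤ coloredConst (Fintype.card σ) e * crossSum (fun i => Fintype.card (κ i)) e := by
        rw [show (2 * e + 2) / 2 = e + 1 by lia, coloredConst, mul_assoc]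
        gcongr
        refine card_filter_card_le_of_colorTrace htrace fun i => (hcard i).trans_eq ?_
        rw [show (2 * e + 1) / 2 = e by lia]

end Colored

/-! ### Exposed faces -/

section ExposedFaces

variable {E : Type*} [NormedAddCommGroup E] [NormedSpace ℝ E]

lemma convexHull_extremePoints_of_finite {P : Set E} (hP : P.Finite) :
    convexHull ℝ ((convexHull ℝ P).extremePoints ℝ) = convexHull ℝ P := by
  have hclosed := (hP.subset (extremePoints_convexHull_subset (𝕜 := ℝ))).isClosed_convexHull ℝ
  rw [← hclosed.closure_eq]
  exact closure_convexHull_extremePoints (hP.isCompact_convexHull ℝ) (convex_convexHull ℝ P)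

lemma convexHull_iUnion_congr {ι : Sort*} {A B : ι → Set E}
    (h : ∀ i, convexHull ℝ (A i) = convexHull ℝ (B i)) :
    convexHull ℝ (⋃ i, A i) = convexHull ℝ (⋃ i, B i) := by
  rw [← iSup_eq_iUnion, ← iSup_eq_iUnion, ← (convexHull ℝ).closure_iSup_closure,
    ← (convexHull ℝ).closure_iSup_closure B, iSup_congr h]

lemma subset_of_isExposed_convexHull {W F F' : Set E} (hW : W.Finite)
    (hF : IsExposed ℝ (convexHull ℝ W) F) (hF' : IsExposed ℝ (convexHull ℝ W) F')
    (h : ∀ w ∈ W, w ∈ F → w ∈ F') : F ⊆ F' := by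
  have hC := hW.isCompact_convexHull ℝ
  have hconv := convex_convexHull ℝ W
  rw [← closure_convexHull_extremePoints (hF.isCompact hC) (hF.convex hconv)]
  refine closure_minimal (convexHull_min (fun x hx => ?_) (hF'.convex hconv))
    (hF'.isClosed hC.isClosed)
  exact h x (extremePoints_convexHull_subset
    (hF.isExtreme.extremePoints_subset_extremePoints hx)) (extremePoints_subset hx)

variable {C F : Set E}

lemma exists_supporting_functional (hF : IsExposed ℝ C F) (hne : F.Nonempty) :
    ∃ (l : Module.Dual ℝ E) (M : ℝ), (∀ x ∈ C, l x ≤ M) ∧ ∀ x ∈ C, x ∈ F ↔ l x = M := by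
  obtain ⟨l, rfl⟩ := hF hne
  obtain ⟨p, hp, hmax⟩ := hne
  refine ⟨l, l p, hmax, fun x hx => ⟨fun h => (hmax x hx).antisymm (h.2 p hp), fun h => ⟨hx, ?_⟩⟩⟩
  exact fun y hy => (hmax y hy).trans_eq h.symm

/-- The supporting functional vanishes on the hyperplane directed by `A`, hence is determined up to
a factor. -/
lemma eq_or_eq_inter_affineSpan [FiniteDimensional ℝ E] {A : Set E} (hA : A.Nonempty)
    (hdim : Module.finrank ℝ (vectorSpan ℝ A) + 1 = Module.finrank ℝ E) (hF : IsExposed ℝ C F)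
    (hAF : A ⊆ F) : F = C ∨ F = C ∩ affineSpan ℝ A := by
  obtain ⟨l, M, -, hFl⟩ := exists_supporting_functional hF (hA.mono hAF)
  have hconst : ∀ x ∈ A, l x = M := fun x hx => (hFl x (hF.subset (hAF hx))).1 (hAF hx)
  obtain ⟨p, hp⟩ := hA
  have hle : vectorSpan ℝ A ≤ LinearMap.ker l := by
    rw [vectorSpan_def, Submodule.span_le]
    rintro _ ⟨x, hx, y, hy, rfl⟩
    exact (map_sub l x y).trans (sub_eq_zero.2 ((hconst x hx).trans (hconst y hy).symm))
  have hmem : ∀ x ∈ C, x ∈ F ↔ x - p ∈ LinearMap.ker l := fun x hx => by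
    rw [hFl x hx, LinearMap.mem_ker, map_sub, hconst p hp, sub_eq_zero]
  rcases eq_or_ne l 0 with rfl | hl
  · exact Or.inl (hF.subset.antisymm fun x hx => (hmem x hx).2 rfl)
  · have hker : vectorSpan ℝ A = LinearMap.ker l := by
      refine Submodule.eq_of_le_of_finrank_eq hle (Nat.succ_injective ?_)
      exact hdim.trans (Module.Dual.finrank_ker_add_one_of_ne_zero hl).symm
    refine Or.inr (Subset.antisymm (fun x hx => ⟨hF.subset hx, ?_⟩) fun x hx => ?_)
    · rw [SetLike.mem_coe,
        ← AffineSubspace.vsub_right_mem_direction_iff_mem (mem_affineSpan ℝ hp),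
        direction_affineSpan, hker]
      exact (hmem x (hF.subset hx)).1 hx
    · rw [hmem x hx.1, ← hker, ← direction_affineSpan]
      exact AffineSubspace.vsub_mem_direction hx.2 (mem_affineSpan ℝ hp)

lemma apply_centroid_lt {V : Finset E} {l : Module.Dual ℝ E} {M : ℝ} (hle : ∀ v ∈ V, l v ≤ M)
    (hlt : ∃ v ∈ V, l v < M) : l (V.centroid ℝ id) < M := by
  have hV : V.Nonempty := hlt.imp fun v hv => hv.1
  have hcard : (0 : ℝ) < #V := mod_cast hV.card_pos
  have hsum : ∑ v ∈ V, l v < #V * M :=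
    (Finset.sum_lt_sum hle hlt).trans_eq (by rw [Finset.sum_const, nsmul_eq_mul])
  rw [Finset.centroid_eq_centerMass V hV]
  simpa [Finset.centerMass, Finset.centroidWeights, ← Finset.mul_sum, inv_mul_lt_iff₀ hcard,
    hcard.ne'] using hsum

end ExposedFaces

section FaceCounting

variable {E σ : Type*} {V : σ → Finset E}

open Classical in
/-- The coloured points lying in `F`. -/
noncomputable def pointTrace [Fintype σ] (V : σ → Finset E) (F : Set E) : Finset (Σ i, V i) :=
  {x | (x.2 : E) ∈ F}

lemma mem_pointTrace [Fintype σ] {F : Set E} {x : Σ i, V i} :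
    x ∈ pointTrace V F ↔ (x.2 : E) ∈ F := by
  simp [pointTrace]

variable [NormedAddCommGroup E] [NormedSpace ℝ E]

/-- The nonempty exposed faces of `conv (⋃ i, V i)` that contain none of the sets `V i`. -/
def transversalFaces (V : σ → Finset E) : Set (Set E) :=
  {F | IsExposed ℝ (convexHull ℝ (⋃ i, (V i : Set E))) F ∧ F.Nonempty ∧
    ∀ i, ¬ (V i : Set E) ⊆ F}

variable [Fintype σ]

lemma injOn_pointTrace (V : σ → Finset E) :
    InjOn (pointTrace V) {F | IsExposed ℝ (convexHull ℝ (⋃ i, (V i : Set E))) F} := by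
  have hW : (⋃ i, (V i : Set E)).Finite := finite_iUnion fun i => (V i).finite_toSet
  have hsub : ∀ {F F' : Set E}, pointTrace V F = pointTrace V F' →
      ∀ w ∈ ⋃ i, (V i : Set E), w ∈ F → w ∈ F' := by
    intro F F' h w hw hwF
    obtain ⟨i, hi⟩ := mem_iUnion.1 hw
    have hmem : (⟨i, w, hi⟩ : Σ i, V i) ∈ pointTrace V F := mem_pointTrace.2 hwF
    rw [h] at hmem
    exact mem_pointTrace.1 hmem
  intro F hF F' hF' h
  exact (subset_of_isExposed_convexHull hW hF hF' (hsub h)).antisymm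
    (subset_of_isExposed_convexHull hW hF' hF (hsub h.symm))

lemma pointTrace_mem_strictTightSets {F : Set E} (hF : F ∈ transversalFaces V) (i₀ : σ) :
    pointTrace V F ∈ strictTightSets (fun x : Σ i, V i => (x.2 : E) - (V i₀).centroid ℝ id)
      fun i => (V i).centroid ℝ id - (V i₀).centroid ℝ id := by
  obtain ⟨hexp, hne, htrans⟩ := hF
  obtain ⟨l, M, hle, hFl⟩ := exists_supporting_functional hexp hne
  have hVC : ∀ i, ∀ v ∈ V i, v ∈ convexHull ℝ (⋃ i, (V i : Set E)) := fun i v hv =>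
    subset_convexHull ℝ _ (mem_iUnion.2 ⟨i, hv⟩)
  have hlt : ∀ i, l ((V i).centroid ℝ id) < M := by
    intro i
    obtain ⟨v, hv, hvF⟩ := not_subset.1 (htrans i)
    exact apply_centroid_lt (fun w hw => hle w (hVC i w hw))
      ⟨v, hv, (hle v (hVC i v hv)).lt_of_ne (mt (hFl v (hVC i v hv)).2 hvF)⟩
  have hscale : 0 < (M - l ((V i₀).centroid ℝ id))⁻¹ := inv_pos.2 (sub_pos.2 (hlt i₀))
  refine mem_strictTightSets.2 ⟨(M - l ((V i₀).centroid ℝ id))⁻¹ • l, fun x => ?_, fun i => ?_, ?_⟩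
  · rw [inv_smul_apply_sub (hlt i₀).ne]
    exact add_le_of_nonpos_right
      (mul_nonpos_of_nonneg_of_nonpos hscale.le (sub_nonpos.2 (hle _ (hVC x.1 _ x.2.2))))
  · rw [inv_smul_apply_sub (hlt i₀).ne]
    exact add_lt_of_neg_right _ (mul_neg_of_pos_of_neg hscale (sub_neg.2 (hlt i)))
  · ext x
    rw [mem_tightSet, mem_pointTrace, inv_smul_apply_sub (hlt i₀).ne, Pi.one_apply, add_eq_left,
      mul_eq_zero_iff_left hscale.ne', sub_eq_zero, hFl _ (hVC x.1 _ x.2.2)]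

variable [FiniteDimensional ℝ E]

lemma finrank_span_sub_centroid_le {V : Finset E} (hV : V.Nonempty) :
    Module.finrank ℝ (Submodule.span ℝ (range fun v : V => (v : E) - V.centroid ℝ id)) ≤
      Module.finrank ℝ (vectorSpan ℝ (V : Set E)) := by
  refine Submodule.finrank_mono (Submodule.span_le.2 ?_)
  rintro _ ⟨v, rfl⟩
  rw [← direction_affineSpan]
  exact AffineSubspace.vsub_mem_direction (mem_affineSpan ℝ v.2)
    (convexHull_subset_affineSpan _ (V.centroid_mem_convexHull hV))

variable [DecidableEq σ] [Nontrivial σ] {e : ℕ}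

lemma encard_transversalFaces_le (hV : ∀ i, (V i).Nonempty) (hE : Module.finrank ℝ E ≤ 2 * e + 2)
    (hdim : ∀ i, Module.finrank ℝ (vectorSpan ℝ (V i : Set E)) ≤ 2 * e + 1) :
    (transversalFaces V).encard ≤
      (coloredConst (Fintype.card σ) e * crossSum (fun i => #(V i)) e : ℕ) := by
  have : ∀ i, Nonempty (V i) := fun i => (hV i).to_subtype
  obtain ⟨i₀⟩ : Nonempty σ := inferInstance
  let a (x : Σ i, V i) : E := x.2 - (V i₀).centroid ℝ id
  let o (i : σ) : E := (V i).centroid ℝ id - (V i₀).centroid ℝ id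
  have hcolor : ∀ i,
      Module.finrank ℝ (Submodule.span ℝ (range fun v => a ⟨i, v⟩ - o i)) ≤ 2 * e + 1 := fun i => by
    have hsub : (fun v => a ⟨i, v⟩ - o i) = fun v : V i => (v : E) - (V i).centroid ℝ id :=
      funext fun v => sub_sub_sub_cancel_right _ _ _
    exact hsub ▸ (finrank_span_sub_centroid_le (hV i)).trans (hdim i)
  calc (transversalFaces V).encard ≤ (strictTightSets a o : Set (Finset (Σ i, V i))).encard :=
        encard_le_encard_of_injOn (fun F hF => pointTrace_mem_strictTightSets hF i₀)
          ((injOn_pointTrace V).mono fun F hF => hF.1)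
    _ ≤ _ := by
        rw [encard_coe_eq_coe_finsetCard, Nat.cast_le]
        simpa only [Fintype.card_coe] using card_strictTightSets_le hE hcolor

theorem encard_setOf_isExposed_le (hV : ∀ i, (V i).Nonempty)
    (hdim : ∀ i, Module.finrank ℝ (vectorSpan ℝ (V i : Set E)) + 1 = Module.finrank ℝ E)
    (hE : Module.finrank ℝ E ≤ 2 * e + 2) :
    {F | IsExposed ℝ (convexHull ℝ (⋃ i, (V i : Set E))) F ∧ F.Nonempty}.encard ≤
      ((Fintype.card σ + 1 + coloredConst (Fintype.card σ) e) *
        crossSum (fun i => #(V i)) e : ℕ) := by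
  classical
  set C := convexHull ℝ (⋃ i, (V i : Set E))
  let slices : Finset (Set E) :=
    insert C (Finset.univ.image fun i => C ∩ affineSpan ℝ (V i : Set E))
  have hslices : #slices ≤ Fintype.card σ + 1 :=
    (Finset.card_insert_le _ _).trans (Nat.succ_le_succ Finset.card_image_le)
  have hcover : {F | IsExposed ℝ C F ∧ F.Nonempty} ⊆ slices ∪ transversalFaces V := by
    rintro F ⟨hF, hne⟩
    by_cases h : ∃ i, (V i : Set E) ⊆ F
    · obtain ⟨i, hi⟩ := h
      refine Or.inl (Finset.mem_insert.2 ?_)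
      refine (eq_or_eq_inter_affineSpan (hV i) (hdim i) hF hi).imp_right fun h => ?_
      exact Finset.mem_image.2 ⟨i, Finset.mem_univ _, h.symm⟩
    · exact Or.inr ⟨hF, hne, not_exists.1 h⟩
  have hcross : 1 ≤ crossSum (fun i => #(V i)) e :=
    (Nat.one_le_pow _ _ (hV (Classical.arbitrary σ)).card_pos).trans
      (pow_le_crossSum (fun i => (hV i).card_pos) e _)
  calc _ ≤ (slices : Set (Set E)).encard + (transversalFaces V).encard :=
        (encard_le_encard hcover).trans (encard_union_le _ _)
    _ ≤ ((Fintype.card σ + 1 : ℕ) : ℕ∞) +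
          (coloredConst (Fintype.card σ) e * crossSum (fun i => #(V i)) e : ℕ) := by
        gcongr
        · rw [encard_coe_eq_coe_finsetCard]
          exact mod_cast hslices
        · exact encard_transversalFaces_le hV hE fun i => by linarith [hdim i]
    _ ≤ _ := by
        rw [← Nat.cast_add, Nat.cast_le, add_mul _ (coloredConst _ _)]
        gcongr
        exact Nat.le_mul_of_pos_right _ hcross

end FaceCounting

theorem stmt5_general {E σ : Type*} [NormedAddCommGroup E] [NormedSpace ℝ E]
    [FiniteDimensional ℝ E] [Fintype σ] [DecidableEq σ] [Nontrivial σ] {d : ℕ} (hd : 0 < d)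
    (hE : Module.finrank ℝ E = d + 1) :
    ∃ c : ℝ, 0 < c ∧ ∀ P : σ → Set E, (∀ i, (P i).Finite) →
      (∀ i, Module.finrank ℝ (vectorSpan ℝ (convexHull ℝ (P i))) = d) →
      {F | IsExposed ℝ (convexHull ℝ (⋃ i, P i)) F ∧ F.Nonempty}.Finite ∧
        ({F | IsExposed ℝ (convexHull ℝ (⋃ i, P i)) F ∧ F.Nonempty}.ncard : ℝ) ≤
          c * ∑ i, ∑ j, if i ≠ j then
            (((convexHull ℝ (P i)).extremePoints ℝ).ncard : ℝ) *
              (((convexHull ℝ (P j)).extremePoints ℝ).ncard : ℝ) ^ (d / 2)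
          else 0 := by
  refine ⟨(Fintype.card σ + 1 + coloredConst (Fintype.card σ) (d / 2) : ℕ), by positivity,
    fun P hfin hdim => ?_⟩
  have hVfin : ∀ i, ((convexHull ℝ (P i)).extremePoints ℝ).Finite := fun i =>
    (hfin i).subset extremePoints_convexHull_subset
  let V (i : σ) : Finset E := (hVfin i).toFinset
  have hhull : ∀ i, convexHull ℝ (V i : Set E) = convexHull ℝ (P i) := fun i => by
    rw [Finite.coe_toFinset, convexHull_extremePoints_of_finite (hfin i)]
  have hunion := convexHull_iUnion_congr hhull
  have hspan : ∀ i, Module.finrank ℝ (vectorSpan ℝ (V i : Set E)) = d := fun i => by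
    rw [← direction_affineSpan, ← affineSpan_convexHull, hhull, direction_affineSpan, hdim]
  have hV : ∀ i, (V i).Nonempty := by
    intro i
    refine Finset.nonempty_iff_ne_empty.2 fun h => hd.ne ?_
    rw [← hspan i, h, Finset.coe_empty, vectorSpan_empty, finrank_bot]
  have hle := encard_setOf_isExposed_le (e := d / 2) hV (fun i => by rw [hspan, hE]) (by lia)
  rw [hunion] at hle
  refine ⟨finite_of_encard_le_coe hle,
    (Nat.cast_le.2 (ENat.toNat_le_of_le_natCast hle)).trans_eq ?_⟩
  simp [crossSum, V, ncard_eq_toFinset_card _ (hVfin _)]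

theorem stmt5 (d m : ℕ) (hd : 3 ≤ d) (hodd : Odd d) (hm : 2 ≤ m) :
    ∃ c : ℝ, 0 < c ∧
      ∀ (u : EuclideanSpace ℝ (Fin (d + 1))) (t : Fin m → ℝ)
        (P : Fin m → Set (EuclideanSpace ℝ (Fin (d + 1)))),
        ‖u‖ = 1 → StrictMono t →
        (∀ i, (P i).Finite) →
        (∀ i, P i ⊆ {x | ⟪x, u⟫ = t i}) →
        (∀ i, adim (convexHull ℝ (P i)) = d) →
        ∀ k, (d + 1) / 2 ≤ k → k ≤ d →
          (fCount (convexHull ℝ (⋃ i, P i)) k : ℝ) ≤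
            c * ∑ i : Fin m, ∑ j : Fin m,
              if i ≠ j then
                (((convexHull ℝ (P i)).extremePoints ℝ).ncard : ℝ) *
                  (((convexHull ℝ (P j)).extremePoints ℝ).ncard : ℝ) ^ (d / 2)
              else 0 := by
  have : Nontrivial (Fin m) := Fin.nontrivial_iff_two_le.2 hm
  obtain ⟨c, hc, hbound⟩ := stmt5_general (E := EuclideanSpace ℝ (Fin (d + 1)))
    (σ := Fin m) (by lia : 0 < d) finrank_euclideanSpace_fin
  refine ⟨c, hc, fun _ _ P _ _ hfin _ hdim k _ _ => ?_⟩
  obtain ⟨hfaces, hle⟩ := hbound P hfin hdim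
  exact (Nat.cast_le.2 (ncard_le_ncard (fun F hF => And.intro hF.1 hF.2.1) hfaces)).trans hle
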